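/- arXiv:2512.15578 — 9 statements merged into one kernel-verified Lean document; each statement's English description precedes it below -/
import Mathlib

section
/- For every natural number n and all real numbers x and c, one has Σ_{k=0}^{n} (1/(k!·(k+1)!)) · ∏_{q=0}^{k−1} (x + q(q+1) − c) = (1/(n!·(n+1)!)) · ∏_{q=1}^{n} (x + q(q+1) − c), where empty products equal 1. -/
/-- For every natural number `n` and all real `x`, `c`:
`Σ_{k=0}^{n} (1/(k!(k+1)!)) ∏_{q=0}^{k-1} (x + q(q+1) - c)
   = (1/(n!(n+1)!)) ∏_{q=1}^{n} (x + q(q+1) - c)`. -/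
theorem stmt1 (n : ℕ) (x c : ℝ) :
    (∑ k ∈ Finset.range (n + 1),
        (1 / ((k.factorial : ℝ) * ((k + 1).factorial : ℝ))) *
          ∏ q ∈ Finset.range k, (x + (q : ℝ) * ((q : ℝ) + 1) - c)) =
      (1 / ((n.factorial : ℝ) * ((n + 1).factorial : ℝ))) *
        ∏ q ∈ Finset.Icc 1 n, (x + (q : ℝ) * ((q : ℝ) + 1) - c) := by
  have key : ∀ m : ℕ, ∏ q ∈ Finset.range (m + 1), (x + (q : ℝ) * ((q : ℝ) + 1) - c) =
      (x - c) * ∏ q ∈ Finset.Icc 1 m, (x + (q : ℝ) * ((q : ℝ) + 1) - c) := by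
    intro m
    induction m with
    | zero => simp
    | succ m ih =>
      rw [Finset.prod_range_succ, ih, Finset.prod_Icc_succ_top (by omega)]
      ring
  induction n with
  | zero => simp
  | succ n ih =>
    rw [Finset.sum_range_succ, ih, key, Finset.prod_Icc_succ_top (by omega)]
    generalize ∏ q ∈ Finset.Icc 1 n, (x + (q : ℝ) * ((q : ℝ) + 1) - c) = P
    have h : (n.factorial : ℝ) ≠ 0 := by exact_mod_cast n.factorial_ne_zero
    have h1 : (n : ℝ) + 1 ≠ 0 := by positivity
    have h2 : (n : ℝ) + 1 + 1 ≠ 0 := by positivity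
    simp only [Nat.factorial_succ]
    push_cast
    field_simp
    ring
end

section
/- For every natural number n ≥ 1 and every real number x, one has Σ_{k=0}^{n} ( (n+1)!/(k!·(k+1)!) + (n+2)!/(k!·(k+2)!) ) · ∏_{q=0}^{k−1} (x + q(q+1)) = (1/n!) · (2x + n + 4) · ∏_{q=2}^{n} (x + q(q+1)), where empty products equal 1. -/
lemma prod_aux (n : ℕ) (x : ℝ) :
    ∏ q ∈ Finset.range (n + 2), (x + (q : ℝ) * ((q : ℝ) + 1)) =
      x * (x + 2) * ∏ q ∈ Finset.Icc 2 (n + 1), (x + (q : ℝ) * ((q : ℝ) + 1)) := by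
  induction n with
  | zero => simp [Finset.prod_range_succ]; left; norm_num
  | succ n ih =>
    rw [Finset.prod_range_succ, ih, Finset.prod_Icc_succ_top (show 2 ≤ n + 1 + 1 by omega)]
    push_cast
    ring

lemma S_aux (n : ℕ) (x : ℝ) :
    ∑ k ∈ Finset.range (n + 2), (1 / ((k.factorial : ℝ) * ((k + 1).factorial : ℝ))) *
          ∏ q ∈ Finset.range k, (x + (q : ℝ) * ((q : ℝ) + 1)) =
      (x + 2) / (((n + 1).factorial : ℝ) * ((n + 2).factorial : ℝ)) *
        ∏ q ∈ Finset.Icc 2 (n + 1), (x + (q : ℝ) * ((q : ℝ) + 1)) := by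
  induction n with
  | zero => simp [Finset.sum_range_succ, Nat.factorial]; ring
  | succ n ih =>
    rw [Finset.sum_range_succ, ih, prod_aux,
      Finset.prod_Icc_succ_top (show 2 ≤ n + 1 + 1 by omega)]
    have h : (n.factorial : ℝ) ≠ 0 := by positivity
    simp only [Nat.factorial_succ]
    push_cast
    field_simp
    ring

lemma T_aux (n : ℕ) (x : ℝ) :
    ∑ k ∈ Finset.range (n + 2), (1 / ((k.factorial : ℝ) * ((k + 2).factorial : ℝ))) *
          ∏ q ∈ Finset.range k, (x + (q : ℝ) * ((q : ℝ) + 1)) =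
      (x + n + 3) / (((n + 1).factorial : ℝ) * ((n + 3).factorial : ℝ)) *
        ∏ q ∈ Finset.Icc 2 (n + 1), (x + (q : ℝ) * ((q : ℝ) + 1)) := by
  induction n with
  | zero => simp [Finset.sum_range_succ, Nat.factorial]; ring
  | succ n ih =>
    rw [Finset.sum_range_succ, ih, prod_aux,
      Finset.prod_Icc_succ_top (show 2 ≤ n + 1 + 1 by omega)]
    have h : (n.factorial : ℝ) ≠ 0 := by positivity
    simp only [Nat.factorial_succ]
    push_cast
    field_simp
    ring

/-- For every natural number `n ≥ 1` and every real `x`: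
`Σ_{k=0}^{n} ((n+1)!/(k!(k+1)!) + (n+2)!/(k!(k+2)!)) ∏_{q=0}^{k-1} (x + q(q+1))
   = (1/n!) (2x + n + 4) ∏_{q=2}^{n} (x + q(q+1))`. -/
theorem stmt2 (n : ℕ) (hn : 1 ≤ n) (x : ℝ) :
    (∑ k ∈ Finset.range (n + 1),
        (((n + 1).factorial : ℝ) / ((k.factorial : ℝ) * ((k + 1).factorial : ℝ)) +
            ((n + 2).factorial : ℝ) / ((k.factorial : ℝ) * ((k + 2).factorial : ℝ))) *
          ∏ q ∈ Finset.range k, (x + (q : ℝ) * ((q : ℝ) + 1))) =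
      (1 / (n.factorial : ℝ)) * (2 * x + (n : ℝ) + 4) *
        ∏ q ∈ Finset.Icc 2 n, (x + (q : ℝ) * ((q : ℝ) + 1)) := by
  obtain ⟨m, rfl⟩ : ∃ m, n = m + 1 := ⟨n - 1, by omega⟩
  have hS := S_aux m x
  have hT := T_aux m x
  have key : ∀ (a b : ℝ) (f g P : ℕ → ℝ) (s : Finset ℕ),
      ∑ k ∈ s, (a / f k + b / g k) * P k =
        a * ∑ k ∈ s, 1 / f k * P k + b * ∑ k ∈ s, 1 / g k * P k := by
    intro a b f g P s
    rw [Finset.mul_sum, Finset.mul_sum, ← Finset.sum_add_distrib]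
    refine Finset.sum_congr rfl fun k _ => ?_
    ring
  refine (key _ _ (fun k => (k.factorial : ℝ) * ((k + 1).factorial : ℝ))
    (fun k => (k.factorial : ℝ) * ((k + 2).factorial : ℝ))
    (fun k => ∏ q ∈ Finset.range k, (x + (q : ℝ) * ((q : ℝ) + 1))) _).trans ?_
  rw [hS, hT]
  have h1 : ((m + 1).factorial : ℝ) ≠ 0 := by positivity
  have h2 : ((m + 1 + 1).factorial : ℝ) ≠ 0 := by positivity
  have h3 : ((m + 1 + 2).factorial : ℝ) ≠ 0 := by positivity
  push_cast
  field_simp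
  ring
end

section
/- Let ℓ be a natural number and n ≥ −1 an integer, and let f : ℝ → ℝ be a function that is twice differentiable at every point of the open interval (−1,1) and satisfies, for all x ∈ (−1,1), (x²−1)²·f''(x) + 2x·(x²−1)·f'(x) − (ℓ(ℓ+1)·(x²−1) + (n+1)²)·f(x) = 0. Then the function u : ℝ → ℝ defined by u(τ) := f(tanh τ)/cosh τ is twice differentiable and satisfies, for all τ ∈ ℝ, u''(τ) + 2·tanh τ·u'(τ) + ℓ(ℓ+1)·sech²τ·u(τ) − n(n+2)·u(τ) = 0. -/
/-- The ansatz `u(τ) = f(tanh τ)/cosh τ` transforms the associated Legendre equation of degree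
`ℓ` and order `n+1` into the radial mode equation
`u'' + 2 tanh τ · u' + ℓ(ℓ+1) sech²τ · u - n(n+2) u = 0` on dS₃. -/
theorem stmt8 (ℓ : ℕ) (n : ℤ) (hn : -1 ≤ n) (f : ℝ → ℝ)
    (hf1 : ∀ x ∈ Set.Ioo (-1 : ℝ) 1, DifferentiableAt ℝ f x)
    (hf2 : ∀ x ∈ Set.Ioo (-1 : ℝ) 1, DifferentiableAt ℝ (deriv f) x)
    (hfeq : ∀ x ∈ Set.Ioo (-1 : ℝ) 1,
      (x ^ 2 - 1) ^ 2 * deriv (deriv f) x + 2 * x * (x ^ 2 - 1) * deriv f x -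
        ((ℓ : ℝ) * ((ℓ : ℝ) + 1) * (x ^ 2 - 1) + ((n : ℝ) + 1) ^ 2) * f x = 0)
    (u : ℝ → ℝ) (hu : ∀ τ, u τ = f (Real.tanh τ) / Real.cosh τ) :
    (∀ τ, DifferentiableAt ℝ u τ) ∧ (∀ τ, DifferentiableAt ℝ (deriv u) τ) ∧
      ∀ τ, deriv (deriv u) τ + 2 * Real.tanh τ * deriv u τ +
          (ℓ : ℝ) * ((ℓ : ℝ) + 1) * (1 / Real.cosh τ) ^ 2 * u τ -
          (n : ℝ) * ((n : ℝ) + 2) * u τ = 0 := by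
  have hc : ∀ τ, Real.cosh τ ≠ 0 := fun τ => (Real.cosh_pos τ).ne'
  have hmem : ∀ τ, Real.tanh τ ∈ Set.Ioo (-1 : ℝ) 1 := fun τ =>
    ⟨Real.neg_one_lt_tanh τ, Real.tanh_lt_one τ⟩
  have hS2 : ∀ τ, (Real.cosh τ)⁻¹ ^ 2 = 1 - Real.tanh τ ^ 2 := by
    intro τ
    have h := Real.cosh_sq τ
    have h0 := hc τ
    rw [Real.tanh_eq_sinh_div_cosh]
    field_simp
    linarith
  have hT : ∀ τ, HasDerivAt Real.tanh ((Real.cosh τ)⁻¹ ^ 2) τ := by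
    intro τ
    have e : Real.tanh = fun t => Real.sinh t / Real.cosh t :=
      funext Real.tanh_eq_sinh_div_cosh
    rw [e]
    refine ((Real.hasDerivAt_sinh τ).div (Real.hasDerivAt_cosh τ) (hc τ)).congr_deriv ?_
    have h := Real.cosh_sq τ
    have h0 := hc τ
    field_simp
    linarith
  have hS : ∀ τ, HasDerivAt (fun t => (Real.cosh t)⁻¹)
      (-((Real.cosh τ)⁻¹ * Real.tanh τ)) τ := by
    intro τ
    refine ((Real.hasDerivAt_cosh τ).inv (hc τ)).congr_deriv ?_
    have h0 := hc τ
    rw [Real.tanh_eq_sinh_div_cosh]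
    field_simp
  have hF : ∀ τ, HasDerivAt (fun t => f (Real.tanh t))
      (deriv f (Real.tanh τ) * (Real.cosh τ)⁻¹ ^ 2) τ := fun τ =>
    HasDerivAt.comp τ (hf1 _ (hmem τ)).hasDerivAt (hT τ)
  have hG : ∀ τ, HasDerivAt (fun t => deriv f (Real.tanh t))
      (deriv (deriv f) (Real.tanh τ) * (Real.cosh τ)⁻¹ ^ 2) τ := fun τ =>
    HasDerivAt.comp τ (hf2 _ (hmem τ)).hasDerivAt (hT τ)
  have eu : u = fun t => f (Real.tanh t) * (Real.cosh t)⁻¹ := by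
    funext t
    rw [hu, div_eq_mul_inv]
  have hu1 : ∀ τ, HasDerivAt u
      (deriv f (Real.tanh τ) * (Real.cosh τ)⁻¹ ^ 2 * (Real.cosh τ)⁻¹ +
        f (Real.tanh τ) * (-((Real.cosh τ)⁻¹ * Real.tanh τ))) τ := by
    intro τ
    rw [eu]
    exact (hF τ).mul (hS τ)
  have eu1 := funext fun τ => (hu1 τ).deriv
  have hu2 := fun τ => (((hG τ).fun_mul ((hS τ).fun_pow 2)).fun_mul (hS τ)).fun_add
    ((hF τ).fun_mul ((hS τ).fun_mul (hT τ)).fun_neg)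
  rw [← eu1] at hu2
  refine ⟨fun τ => (hu1 τ).differentiableAt, fun τ => (hu2 τ).differentiableAt, fun τ => ?_⟩
  rw [(hu2 τ).deriv, (hu1 τ).deriv, hu, one_div, div_eq_mul_inv]
  have h := hfeq _ (hmem τ)
  have h2 := hS2 τ
  generalize deriv (deriv f) (Real.tanh τ) = f2 at *
  generalize deriv f (Real.tanh τ) = f1 at *
  generalize f (Real.tanh τ) = f0 at *
  generalize Real.tanh τ = T at *
  generalize (Real.cosh τ)⁻¹ = s at *
  have h3 : T ^ 2 = 1 - s ^ 2 := by linarith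
  rw [h3] at h
  push_cast
  linear_combination s * h - s * f0 * h3
end

section
/- Let ℓ be a natural number and n ≥ −1 an integer, and let F : ℂ → ℂ and F', F'' : ℂ → ℂ be such that for every real t, F has complex derivative F'(it) at it and F' has complex derivative F''(it) at it, and such that for all τ ∈ ℝ, at the point z = i·sinh τ one has (z²−1)²·F''(z) + 2z·(z²−1)·F'(z) − ((n+½)(n+³⁄₂)·(z²−1) + (ℓ+½)²)·F(z) = 0. Then the function u : ℝ → ℂ defined by u(τ) := F(i·sinh τ)/√(cosh τ) is twice differentiable and satisfies, for all τ ∈ ℝ, u''(τ) + 2·tanh τ·u'(τ) + ℓ(ℓ+1)·sech²τ·u(τ) − n(n+2)·u(τ) = 0. -/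
open Complex

/-- The ansatz `u(τ) = F(i sinh τ)/√(cosh τ)` transforms the associated Legendre equation of
degree `n + 1/2` and order `ℓ + 1/2` (evaluated on the imaginary axis) into the radial mode
equation `u'' + 2 tanh τ · u' + ℓ(ℓ+1) sech²τ · u - n(n+2) u = 0` on dS₃. -/
theorem stmt9 (ℓ : ℕ) (n : ℤ) (hn : -1 ≤ n) (F F' F'' : ℂ → ℂ)
    (hF : ∀ t : ℝ, HasDerivAt F (F' (Complex.I * (t : ℂ))) (Complex.I * (t : ℂ)))
    (hF' : ∀ t : ℝ, HasDerivAt F' (F'' (Complex.I * (t : ℂ))) (Complex.I * (t : ℂ)))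
    (hFeq : ∀ τ : ℝ,
      ((Complex.I * (Real.sinh τ : ℂ)) ^ 2 - 1) ^ 2 * F'' (Complex.I * (Real.sinh τ : ℂ)) +
        2 * (Complex.I * (Real.sinh τ : ℂ)) * ((Complex.I * (Real.sinh τ : ℂ)) ^ 2 - 1) *
          F' (Complex.I * (Real.sinh τ : ℂ)) -
        (((n : ℂ) + 1 / 2) * ((n : ℂ) + 3 / 2) * ((Complex.I * (Real.sinh τ : ℂ)) ^ 2 - 1) +
            ((ℓ : ℂ) + 1 / 2) ^ 2) * F (Complex.I * (Real.sinh τ : ℂ)) = 0)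
    (u : ℝ → ℂ)
    (hu : ∀ τ : ℝ, u τ = F (Complex.I * (Real.sinh τ : ℂ)) / (Real.sqrt (Real.cosh τ) : ℂ)) :
    (∀ τ : ℝ, DifferentiableAt ℝ u τ) ∧ (∀ τ : ℝ, DifferentiableAt ℝ (deriv u) τ) ∧
      ∀ τ : ℝ, deriv (deriv u) τ + 2 * (Real.tanh τ : ℂ) * deriv u τ +
          (ℓ : ℂ) * ((ℓ : ℂ) + 1) * ((1 / Real.cosh τ : ℝ) : ℂ) ^ 2 * u τ -
          (n : ℂ) * ((n : ℂ) + 2) * u τ = 0 := by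
  have hr0 : ∀ τ : ℝ, (Real.sqrt (Real.cosh τ) : ℂ) ≠ 0 := fun τ => by
    have := Real.sqrt_pos.mpr (Real.cosh_pos τ)
    exact_mod_cast this.ne'
  have hr2 : ∀ τ : ℝ, ((Real.cosh τ : ℝ) : ℂ) = (Real.sqrt (Real.cosh τ) : ℂ) ^ 2 := fun τ => by
    have := Real.sq_sqrt (Real.cosh_pos τ).le
    exact_mod_cast this.symm
  have hs : ∀ τ : ℝ, HasDerivAt (fun x : ℝ => ((Real.sinh x : ℝ) : ℂ)) ((Real.cosh τ : ℝ) : ℂ) τ :=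
    fun τ => (Real.hasDerivAt_sinh τ).ofReal_comp
  have hr : ∀ τ : ℝ, HasDerivAt (fun x : ℝ => ((Real.sqrt (Real.cosh x) : ℝ) : ℂ))
      ((Real.sinh τ : ℂ) / (2 * (Real.sqrt (Real.cosh τ) : ℂ))) τ := fun τ => by
    have := ((Real.hasDerivAt_cosh τ).sqrt (Real.cosh_pos τ).ne').ofReal_comp
    convert this using 1
    push_cast
    rfl
  have hz : ∀ τ : ℝ, HasDerivAt (fun x : ℝ => Complex.I * ((Real.sinh x : ℝ) : ℂ))
      (Complex.I * ((Real.cosh τ : ℝ) : ℂ)) τ := fun τ => (hs τ).const_mul _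
  have hf : ∀ τ : ℝ, HasDerivAt (fun x : ℝ => F (Complex.I * ((Real.sinh x : ℝ) : ℂ)))
      (F' (Complex.I * (Real.sinh τ : ℂ)) * (Complex.I * ((Real.cosh τ : ℝ) : ℂ))) τ :=
    fun τ => HasDerivAt.comp τ (hF (Real.sinh τ)) (hz τ)
  have hf' : ∀ τ : ℝ, HasDerivAt (fun x : ℝ => F' (Complex.I * ((Real.sinh x : ℝ) : ℂ)))
      (F'' (Complex.I * (Real.sinh τ : ℂ)) * (Complex.I * ((Real.cosh τ : ℝ) : ℂ))) τ :=
    fun τ => HasDerivAt.comp τ (hF' (Real.sinh τ)) (hz τ)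
  have hu1 : ∀ τ : ℝ, HasDerivAt u
      (Complex.I * (F' (Complex.I * (Real.sinh τ : ℂ)) * (Real.sqrt (Real.cosh τ) : ℂ)) -
        F (Complex.I * (Real.sinh τ : ℂ)) * (Real.sinh τ : ℂ) /
          (2 * (Real.sqrt (Real.cosh τ) : ℂ) ^ 3)) τ := fun τ => by
    have h := (hf τ).div (hr τ) (hr0 τ)
    rw [show u = _ from funext hu]
    refine h.congr_deriv ?_
    have := hr0 τ
    rw [hr2 τ]
    field_simp
  have hd : deriv u = fun τ : ℝ =>
      (Complex.I * (F' (Complex.I * (Real.sinh τ : ℂ)) * (Real.sqrt (Real.cosh τ) : ℂ)) -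
        F (Complex.I * (Real.sinh τ : ℂ)) * (Real.sinh τ : ℂ) /
          (2 * (Real.sqrt (Real.cosh τ) : ℂ) ^ 3)) := funext fun τ => (hu1 τ).deriv
  have hu2 := fun τ : ℝ => (((hf' τ).mul (hr τ)).const_mul Complex.I).sub
    (((hf τ).mul (hs τ)).div (((hr τ).pow 3).const_mul 2)
      (mul_ne_zero two_ne_zero (pow_ne_zero 3 (hr0 τ))))
  refine ⟨fun τ => (hu1 τ).differentiableAt, fun τ => ?_, fun τ => ?_⟩
  · rw [hd]
    exact (hu2 τ).differentiableAt
  · have h2 := (hu2 τ).deriv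
    change deriv (fun τ : ℝ =>
      (Complex.I * (F' (Complex.I * (Real.sinh τ : ℂ)) * (Real.sqrt (Real.cosh τ) : ℂ)) -
        F (Complex.I * (Real.sinh τ : ℂ)) * (Real.sinh τ : ℂ) /
          (2 * (Real.sqrt (Real.cosh τ) : ℂ) ^ 3))) τ = _ at h2
    rw [← hd] at h2
    rw [h2, hd, hu]
    have hE := hFeq τ
    have h0 := hr0 τ
    have hc := hr2 τ
    have hcs : ((Real.sinh τ : ℝ) : ℂ) ^ 2 = (Real.sqrt (Real.cosh τ) : ℂ) ^ 4 - 1 := by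
      have h4 : ((Real.sinh τ : ℝ) : ℂ) ^ 2 = ((Real.cosh τ : ℝ) : ℂ) ^ 2 - 1 := by
        exact_mod_cast Real.sinh_sq τ
      rw [h4, hc]
      ring
    rw [Real.tanh_eq_sinh_div_cosh]
    simp only [Complex.ofReal_div, Complex.ofReal_one, Pi.pow_apply, Pi.mul_apply]
    rw [hc]
    generalize F (Complex.I * (Real.sinh τ : ℂ)) = A at *
    generalize F' (Complex.I * (Real.sinh τ : ℂ)) = B at *
    generalize F'' (Complex.I * (Real.sinh τ : ℂ)) = C at *
    clear hd h2 hu2 hu1 hf hf' hz hr hs hr2 hr0 hFeq hF hF' hu hc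
    generalize ((Real.sinh τ : ℝ) : ℂ) = s at *
    generalize ((Real.sqrt (Real.cosh τ) : ℝ) : ℂ) = r at *
    have hI : Complex.I ^ 2 = -1 := Complex.I_sq
    have hw : (Complex.I * s) ^ 2 - 1 = - r ^ 4 := by
      rw [mul_pow, hI, hcs]; ring
    rw [hw] at hE
    generalize Complex.I = j at *
    field_simp
    push_cast
    linear_combination (-4 * r ^ 2) * hE + 4 * r ^ 10 * C * hI - A * r ^ 2 * hcs
end

section
/- Let m ≤ ℓ be natural numbers and for 0 ≤ k ≤ ℓ−m set a_k := (−ℓ)_{m+k}·(ℓ+1)_{m+k} / (k!·(m+k)!) ∈ ℝ, where (a)_k is the ascending Pochhammer symbol. Define P : ℝ → ℝ on (−1,1) by P(x) := 2^{−m}·(1−x²)^{m/2}·Σ_{k=0}^{ℓ−m} a_k·((1−x)/2)^k, where (1−x²)^{m/2} denotes the positive real power. Then for all x ∈ (−1,1), (x²−1)²·P''(x) + 2x·(x²−1)·P'(x) − (ℓ(ℓ+1)·(x²−1) + m²)·P(x) = 0. -/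
open Polynomial in
lemma aux_poly (m ℓ : ℕ) (a : ℕ → ℝ)
    (hr : ∀ k : ℕ, a (k+1) * ((k:ℝ)+1) * ((m:ℝ)+k+1) = a k * ((m:ℝ)+k-ℓ) * ((ℓ:ℝ)+1+m+k)) (t : ℝ)
    (n : ℕ) :
    t * (1 - t) * ((∑ k ∈ Finset.range (n+1), C (a k) * X ^ k).derivative.derivative).eval t
    + ((m:ℝ)+1) * (1 - 2 * t) * ((∑ k ∈ Finset.range (n+1), C (a k) * X ^ k).derivative).eval t
    + ((ℓ:ℝ)*(ℓ+1) - m*(m+1)) * (∑ k ∈ Finset.range (n+1), C (a k) * X ^ k).eval t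
    = - (a (n+1) * ((n:ℝ)+1) * ((m:ℝ)+n+1)) * t ^ n := by
  induction n with
  | zero =>
    rw [hr]
    simp
    ring
  | succ n ih =>
    rw [Finset.sum_range_succ]
    rw [hr (n+1)]
    simp only [derivative_add, eval_add, derivative_C_mul_X_pow, eval_mul, eval_C, eval_pow, eval_X] at ih ⊢
    rcases n with _ | n
    · simp at ih ⊢
      linear_combination ih
    · simp only [Nat.add_sub_cancel] at ih ⊢
      push_cast at ih ⊢
      linear_combination ih

/-- The terminating series for the associated Legendre function of the first kind
`P(x) = 2^{-m} (1-x²)^{m/2} Σ_{k=0}^{ℓ-m} a_k ((1-x)/2)^k`, with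
`a_k = (-ℓ)_{m+k} (ℓ+1)_{m+k}/(k!(m+k)!)`, satisfies the associated Legendre equation of
degree `ℓ` and order `m` on `(-1,1)`:
`(x²-1)² P'' + 2x(x²-1) P' - (ℓ(ℓ+1)(x²-1) + m²) P = 0`. -/
theorem stmt10 (m ℓ : ℕ) (hml : m ≤ ℓ) (a : ℕ → ℝ)
    (ha : ∀ k, a k =
      (ascPochhammer ℝ (m + k)).eval (-(ℓ : ℝ)) * (ascPochhammer ℝ (m + k)).eval ((ℓ : ℝ) + 1) /
        ((k.factorial : ℝ) * ((m + k).factorial : ℝ)))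
    (P : ℝ → ℝ)
    (hP : ∀ x ∈ Set.Ioo (-1 : ℝ) 1, P x =
      ((2 : ℝ) ^ m)⁻¹ * (1 - x ^ 2) ^ ((m : ℝ) / 2) *
        ∑ k ∈ Finset.range (ℓ - m + 1), a k * ((1 - x) / 2) ^ k) :
    ∀ x ∈ Set.Ioo (-1 : ℝ) 1,
      (x ^ 2 - 1) ^ 2 * deriv (deriv P) x + 2 * x * (x ^ 2 - 1) * deriv P x -
        ((ℓ : ℝ) * ((ℓ : ℝ) + 1) * (x ^ 2 - 1) + (m : ℝ) ^ 2) * P x = 0 := by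
  have hr : ∀ k : ℕ, a (k+1) * ((k:ℝ)+1) * ((m:ℝ)+k+1)
      = a k * ((m:ℝ)+k-ℓ) * ((ℓ:ℝ)+1+m+k) := by
    intro k
    rw [ha, ha, ← add_assoc, ascPochhammer_succ_eval, ascPochhammer_succ_eval,
      Nat.factorial_succ, Nat.factorial_succ]
    have h1 : (k.factorial : ℝ) ≠ 0 := by positivity
    have h2 : ((m+k).factorial : ℝ) ≠ 0 := by positivity
    have h3 : (k:ℝ)+1 ≠ 0 := by positivity
    have h4 : (m:ℝ)+k+1 ≠ 0 := by positivity
    push_cast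
    field_simp
    ring
  set v : Polynomial ℝ := ∑ k ∈ Finset.range (ℓ - m + 1), Polynomial.C (a k) * Polynomial.X ^ k
    with hv
  set c : ℝ := ((2 : ℝ) ^ m)⁻¹ with hc
  set s : ℝ := (m : ℝ) / 2 with hs
  have hP' : ∀ x ∈ Set.Ioo (-1 : ℝ) 1,
      P x = c * (1 - x ^ 2) ^ s * v.eval ((1 - x) / 2) := by
    intro x hx
    rw [hP x hx, hv, Polynomial.eval_finsetSum]
    simp
  have hode : ∀ t : ℝ, t * (1 - t) * (v.derivative.derivative).eval t
      + ((m:ℝ)+1) * (1 - 2 * t) * (v.derivative).eval t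
      + ((ℓ:ℝ)*(ℓ+1) - m*(m+1)) * v.eval t = 0 := by
    intro t
    have h := aux_poly m ℓ a hr t (ℓ - m)
    rw [hr, Nat.cast_sub hml] at h
    rw [hv, h]
    ring
  have hd : ∀ (q : Polynomial ℝ) (x : ℝ),
      HasDerivAt (fun x : ℝ => q.eval ((1 - x) / 2)) (-(q.derivative.eval ((1 - x) / 2)) / 2) x := by
    intro q x
    have h := (q.hasDerivAt ((1 - x) / 2)).comp x
      (((hasDerivAt_id x).const_sub 1).div_const 2)
    refine h.congr_deriv ?_
    ring
  have hw : ∀ x ∈ Set.Ioo (-1 : ℝ) 1, 0 < 1 - x ^ 2 := by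
    intro x hx
    nlinarith [hx.1, hx.2]
  have hpow : ∀ x ∈ Set.Ioo (-1 : ℝ) 1,
      HasDerivAt (fun x : ℝ => (1 - x ^ 2) ^ s) (-(m:ℝ) * x * (1 - x ^ 2) ^ s / (1 - x ^ 2)) x := by
    intro x hx
    have h := (((hasDerivAt_id x).pow 2).const_sub 1).rpow_const (p := s)
      (Or.inl (hw x hx).ne')
    refine h.congr_deriv ?_
    simp only [id, Pi.pow_apply]
    rw [Real.rpow_sub_one (hw x hx).ne', hs]
    push_cast
    ring
  have hnhds : ∀ x ∈ Set.Ioo (-1 : ℝ) 1, Set.Ioo (-1 : ℝ) 1 ∈ nhds x :=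
    fun x hx => isOpen_Ioo.mem_nhds hx
  have hP1 : ∀ x ∈ Set.Ioo (-1 : ℝ) 1,
      deriv P x = (c * (-(m:ℝ) * x * (1 - x ^ 2) ^ s / (1 - x ^ 2))) * v.eval ((1 - x) / 2)
        + (c * (1 - x ^ 2) ^ s) * (-(v.derivative.eval ((1 - x) / 2)) / 2) := by
    intro x hx
    have he : P =ᶠ[nhds x] fun x => c * (1 - x ^ 2) ^ s * v.eval ((1 - x) / 2) :=
      Filter.eventuallyEq_of_mem (hnhds x hx) hP'
    rw [he.deriv_eq]
    exact (((hpow x hx).const_mul c).mul (hd v x)).deriv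
  intro x hx
  have hwx := (hw x hx).ne'
  have hquad : HasDerivAt (fun x : ℝ => 1 - x ^ 2) (-(2 * x)) x := by
    have h := ((hasDerivAt_id x).pow 2).const_sub 1
    refine h.congr_deriv ?_
    simp
  have hlin : HasDerivAt (fun x : ℝ => -(m:ℝ) * x) (-(m:ℝ)) x := by
    simpa using (hasDerivAt_id x).const_mul (-(m:ℝ))
  have hP2 := ((((hlin.mul (hpow x hx)).div hquad hwx).const_mul c).mul (hd v x)).add
    (((hpow x hx).const_mul c).mul (((hd v.derivative x).neg).div_const 2))
  have he := (Filter.eventuallyEq_of_mem (hnhds x hx) hP1).deriv_eq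
  have hP2' := he.trans hP2.deriv
  rw [hP2', hP1 x hx, hP' x hx]
  have ho := hode ((1 - x) / 2)
  simp only [Pi.mul_apply, Pi.neg_apply, Pi.div_apply]
  clear hP2' hP2 he
  generalize v.eval ((1 - x) / 2) = v0 at ho ⊢
  generalize v.derivative.eval ((1 - x) / 2) = v1 at ho ⊢
  generalize v.derivative.derivative.eval ((1 - x) / 2) = v2 at ho ⊢
  generalize (1 - x ^ 2) ^ s = w
  clear_value c
  refine Eq.trans ?_ ((congrArg (fun z => c * w * (1 - x ^ 2) * z) ho).trans (mul_zero _))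
  field_simp
  ring
end

section
/- Let m ≤ ℓ be natural numbers and for 0 ≤ k ≤ ℓ−m set a_k := (−ℓ)_{m+k}·(ℓ+1)_{m+k} / (k!·(m+k)!) ∈ ℝ, where (a)_k is the ascending Pochhammer symbol. Define u : ℝ → ℝ by u(τ) := (sech τ)^{m+1}·Σ_{k=0}^{ℓ−m} a_k·((1−tanh τ)/2)^k. Then u is twice differentiable and for all τ ∈ ℝ, u''(τ) + 2·tanh τ·u'(τ) + ℓ(ℓ+1)·sech²τ·u(τ) = (m²−1)·u(τ). -/
open Polynomial in
lemma aux_ode (m ℓ : ℕ) (a : ℕ → ℝ) (P : ℝ[X]) (hP : ∀ k, P.coeff k = a k)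
    (hrec : ∀ k : ℕ, ((k : ℝ) + 1) * (k + m + 1) * a (k + 1)
      = ((m : ℝ) + k - ℓ) * (m + k + ℓ + 1) * a k) (z : ℝ) :
    z * (1 - z) * (derivative (derivative P)).eval z
      + (m + 1) * (1 - 2 * z) * (derivative P).eval z
      + ((ℓ : ℝ) * (ℓ + 1) - m * (m + 1)) * P.eval z = 0 := by
  have h : derivative (derivative P) * X - derivative (derivative P) * X * X
      + C ((m : ℝ) + 1) * derivative P - C (2 * ((m : ℝ) + 1)) * (derivative P * X)
      + C ((ℓ : ℝ) * (ℓ + 1) - m * (m + 1)) * P = 0 := by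
    ext k
    rcases k with _ | _ | k
    · have := hrec 0
      simp [coeff_derivative, hP, mul_coeff_zero] at this ⊢
      linarith
    · have := hrec 1
      simp only [coeff_add, coeff_sub, coeff_C_mul, coeff_mul_X, coeff_derivative, hP,
        mul_coeff_zero, coeff_X_zero, coeff_zero]
      push_cast at this ⊢
      norm_num at this ⊢
      linarith
    · have := hrec (k + 2)
      simp only [coeff_add, coeff_sub, coeff_C_mul, coeff_mul_X, coeff_derivative, hP, coeff_zero]
      push_cast at this ⊢
      linear_combination this
  have h2 := congrArg (fun q => q.eval z) h
  simp only [eval_add, eval_sub, eval_mul, eval_X, eval_C, eval_zero] at h2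
  linear_combination h2

lemma aux_rec (m ℓ : ℕ) (a : ℕ → ℝ)
    (ha : ∀ k, a k =
      (ascPochhammer ℝ (m + k)).eval (-(ℓ : ℝ)) * (ascPochhammer ℝ (m + k)).eval ((ℓ : ℝ) + 1) /
        ((k.factorial : ℝ) * ((m + k).factorial : ℝ))) (k : ℕ) :
    ((k : ℝ) + 1) * (k + m + 1) * a (k + 1)
      = ((m : ℝ) + k - ℓ) * (m + k + ℓ + 1) * a k := by
  have h1 : (k.factorial : ℝ) ≠ 0 := by positivity
  have h2 : ((m + k).factorial : ℝ) ≠ 0 := by positivity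
  have h3 : (k : ℝ) + 1 ≠ 0 := by positivity
  have h4 : (m : ℝ) + k + 1 ≠ 0 := by positivity
  rw [ha, ha, ← add_assoc, ascPochhammer_succ_eval, ascPochhammer_succ_eval,
    Nat.factorial_succ, Nat.factorial_succ]
  push_cast
  field_simp
  ring

lemma aux_zero (m ℓ : ℕ) (hml : m ≤ ℓ) (a : ℕ → ℝ)
    (hrec : ∀ k : ℕ, ((k : ℝ) + 1) * (k + m + 1) * a (k + 1)
      = ((m : ℝ) + k - ℓ) * (m + k + ℓ + 1) * a k) (j : ℕ) : a (ℓ - m + 1 + j) = 0 := by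
  have key : ∀ k : ℕ, ((m : ℝ) + k - ℓ) * a k = 0 → a (k + 1) = 0 := by
    intro k hk
    have h := hrec k
    have h3 : ((k : ℝ) + 1) * (k + m + 1) ≠ 0 := by positivity
    have : ((k : ℝ) + 1) * (k + m + 1) * a (k + 1) = 0 := by
      linear_combination h + (m + k + ℓ + 1) * hk
    exact (mul_eq_zero.mp this).resolve_left h3
  induction j with
  | zero =>
    apply key
    rw [Nat.cast_sub hml]
    ring
  | succ j ih =>
    rw [← add_assoc]
    apply key
    rw [ih, mul_zero]

open Polynomial in
lemma aux_deriv (n : ℕ) (Q : ℝ[X]) (τ : ℝ) :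
    HasDerivAt (fun τ => (1 / Real.cosh τ) ^ n * Q.eval ((1 - Real.tanh τ) / 2))
      (-(n * Real.tanh τ * ((1 / Real.cosh τ) ^ n * Q.eval ((1 - Real.tanh τ) / 2)))
        - (1 / Real.cosh τ) ^ (n + 2) * (derivative Q).eval ((1 - Real.tanh τ) / 2) / 2) τ := by
  have hc : Real.cosh τ ≠ 0 := (Real.cosh_pos τ).ne'
  have ht : HasDerivAt Real.tanh ((1 / Real.cosh τ) ^ 2) τ := by
    have h := (Real.hasDerivAt_sinh τ).div (Real.hasDerivAt_cosh τ) hc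
    have e : Real.tanh = fun x => Real.sinh x / Real.cosh x := funext Real.tanh_eq_sinh_div_cosh
    rw [e]
    refine h.congr_deriv ?_
    have := Real.cosh_sq τ
    field_simp
    linarith
  have hs : HasDerivAt (fun τ => 1 / Real.cosh τ) (-(Real.tanh τ * (1 / Real.cosh τ))) τ := by
    have h := (Real.hasDerivAt_cosh τ).inv hc
    simp only [one_div]
    refine HasDerivAt.congr_deriv (f := fun τ => (Real.cosh τ)⁻¹) h ?_
    rw [Real.tanh_eq_sinh_div_cosh]
    field_simp
  have hz : HasDerivAt (fun τ => (1 - Real.tanh τ) / 2) (-((1 / Real.cosh τ) ^ 2) / 2) τ :=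
    (ht.const_sub 1).div_const 2
  have hq := (Q.hasDerivAt ((1 - Real.tanh τ) / 2)).comp τ hz
  have h := (hs.pow n).mul hq
  refine HasDerivAt.congr_deriv h ?_
  rcases n with _ | n
  · simp
    ring
  · simp only [Nat.add_sub_cancel, Pi.pow_apply, Function.comp]
    push_cast
    ring

/-- The radial part of the p-type scalar harmonic on dS₃ for `ℓ ≥ m`:
`u(τ) = (sech τ)^{m+1} Σ_{k=0}^{ℓ-m} a_k ((1-tanh τ)/2)^k`, with
`a_k = (-ℓ)_{m+k} (ℓ+1)_{m+k}/(k!(m+k)!)`, is twice differentiable and satisfies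
`u'' + 2 tanh τ · u' + ℓ(ℓ+1) sech²τ · u = (m²-1) u` on `ℝ`. -/
theorem stmt12 (m ℓ : ℕ) (hml : m ≤ ℓ) (a : ℕ → ℝ)
    (ha : ∀ k, a k =
      (ascPochhammer ℝ (m + k)).eval (-(ℓ : ℝ)) * (ascPochhammer ℝ (m + k)).eval ((ℓ : ℝ) + 1) /
        ((k.factorial : ℝ) * ((m + k).factorial : ℝ)))
    (u : ℝ → ℝ)
    (hu : ∀ τ, u τ = (1 / Real.cosh τ) ^ (m + 1) *
        ∑ k ∈ Finset.range (ℓ - m + 1), a k * ((1 - Real.tanh τ) / 2) ^ k) :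
    (∀ τ, DifferentiableAt ℝ u τ) ∧ (∀ τ, DifferentiableAt ℝ (deriv u) τ) ∧
      ∀ τ, deriv (deriv u) τ + 2 * Real.tanh τ * deriv u τ +
          (ℓ : ℝ) * ((ℓ : ℝ) + 1) * (1 / Real.cosh τ) ^ 2 * u τ =
        ((m : ℝ) ^ 2 - 1) * u τ := by
  have hrec := aux_rec m ℓ a ha
  set P : Polynomial ℝ := ∑ k ∈ Finset.range (ℓ - m + 1), Polynomial.C (a k) * Polynomial.X ^ k
    with hPdef
  have hP : ∀ k, P.coeff k = a k := by
    intro k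
    simp only [hPdef, Polynomial.finsetSum_coeff, Polynomial.coeff_C_mul_X_pow,
      Finset.sum_ite_eq, Finset.mem_range]
    split_ifs with h
    · rfl
    · obtain ⟨j, rfl⟩ := Nat.exists_eq_add_of_le (not_lt.mp h)
      exact (aux_zero m ℓ hml a hrec j).symm
  have hu' : u = fun τ => (1 / Real.cosh τ) ^ (m + 1) * P.eval ((1 - Real.tanh τ) / 2) := by
    funext τ
    rw [hu, hPdef, Polynomial.eval_finsetSum]
    simp
  set P' := Polynomial.derivative P with hP'
  set P'' := Polynomial.derivative P' with hP''
  set Q : Polynomial ℝ := (1 - Polynomial.C 2 * Polynomial.X) * P with hQ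
  have hd : deriv u = fun τ => -((m + 1) *
      ((1 / Real.cosh τ) ^ (m + 1) * Q.eval ((1 - Real.tanh τ) / 2)))
      - (1 / Real.cosh τ) ^ (m + 3) * P'.eval ((1 - Real.tanh τ) / 2) / 2 := by
    funext τ
    rw [hu', (aux_deriv (m + 1) P τ).deriv]
    simp only [hQ, Polynomial.eval_mul, Polynomial.eval_sub, Polynomial.eval_one,
      Polynomial.eval_C, Polynomial.eval_X]
    push_cast
    ring
  have hdd := fun τ => (((aux_deriv (m + 1) Q τ).const_mul ((m : ℝ) + 1)).neg).sub
    ((aux_deriv (m + 3) P' τ).div_const 2)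
  refine ⟨fun τ => ?_, fun τ => ?_, fun τ => ?_⟩
  · rw [hu']
    exact (aux_deriv (m + 1) P τ).differentiableAt
  · rw [hd]
    exact (hdd τ).differentiableAt
  · have e2 := ((hdd τ).congr_of_eventuallyEq
      (Filter.Eventually.of_forall fun x => congrFun hd x)).deriv
    rw [e2, hd, hu']
    have hode := aux_ode m ℓ a P hP hrec ((1 - Real.tanh τ) / 2)
    rw [← hP', ← hP''] at hode
    have hst : (1 / Real.cosh τ) ^ 2 = 1 - Real.tanh τ ^ 2 := by
      have := Real.cosh_sq τ
      have hc : Real.cosh τ ≠ 0 := (Real.cosh_pos τ).ne'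
      rw [Real.tanh_eq_sinh_div_cosh]
      field_simp
      linarith
    have hQd : Polynomial.derivative Q = (1 - Polynomial.C 2 * Polynomial.X) * P'
        - Polynomial.C 2 * P := by
      simp [hQ, hP']
      ring
    simp only [hQd, ← hP'']
    simp only [hQ, Polynomial.eval_mul, Polynomial.eval_sub, Polynomial.eval_one,
      Polynomial.eval_C, Polynomial.eval_X]
    push_cast
    generalize 1 / Real.cosh τ = s at *
    generalize Real.tanh τ = t at *
    generalize P.eval ((1 - t) / 2) = p at *
    generalize P'.eval ((1 - t) / 2) = p1 at *
    generalize P''.eval ((1 - t) / 2) = p2 at *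
    have e3 : s ^ (m + 1 + 2) = s ^ (m + 1) * (1 - t ^ 2) := by rw [pow_add, hst]
    have e4 : s ^ (m + 3) = s ^ (m + 1) * (1 - t ^ 2) := e3
    have e5 : s ^ (m + 3 + 2) = s ^ (m + 1) * (1 - t ^ 2) * (1 - t ^ 2) := by
      rw [pow_add, hst, e4]
    rw [e3, e5, hst]
    linear_combination s ^ (m + 1) * (1 - t ^ 2) * hode
end

section
/- The function u : ℝ → ℝ defined by u(τ) := sinh τ − 2τ·cosh τ + τ/cosh τ is twice differentiable and satisfies u''(τ) + 2·tanh τ·u'(τ) − 3·u(τ) = −8·sinh τ for all τ ∈ ℝ. -/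
/-- The function `u(τ) = sinh τ - 2τ cosh τ + τ/cosh τ` is twice differentiable and satisfies
`u'' + 2 tanh τ · u' - 3u = -8 sinh τ` on `ℝ`. -/
theorem stmt16 (u : ℝ → ℝ)
    (hu : ∀ τ, u τ = Real.sinh τ - 2 * τ * Real.cosh τ + τ / Real.cosh τ) :
    (∀ τ, DifferentiableAt ℝ u τ) ∧ (∀ τ, DifferentiableAt ℝ (deriv u) τ) ∧
      ∀ τ, deriv (deriv u) τ + 2 * Real.tanh τ * deriv u τ - 3 * u τ =
        -8 * Real.sinh τ := by
  have hc : ∀ τ, Real.cosh τ ≠ 0 := fun τ => (Real.cosh_pos τ).ne'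
  have h1 : ∀ τ, HasDerivAt u (-Real.cosh τ - 2 * τ * Real.sinh τ +
      (Real.cosh τ - τ * Real.sinh τ) / Real.cosh τ ^ 2) τ := by
    intro τ
    rw [funext hu]
    have h := ((Real.hasDerivAt_sinh τ).sub
      (((hasDerivAt_id' τ).const_mul 2).mul (Real.hasDerivAt_cosh τ))).add
      ((hasDerivAt_id' τ).div (Real.hasDerivAt_cosh τ) (hc τ))
    refine h.congr_deriv ?_
    ring
  have hd := funext fun τ => (h1 τ).deriv
  have h2 : ∀ τ, HasDerivAt (deriv u) (-3 * Real.sinh τ - 2 * τ * Real.cosh τ +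
      (-τ * Real.cosh τ * Real.cosh τ ^ 2 - (Real.cosh τ - τ * Real.sinh τ) *
        (2 * Real.cosh τ * Real.sinh τ)) / (Real.cosh τ ^ 2) ^ 2) τ := by
    intro τ
    rw [hd]
    have h := ((Real.hasDerivAt_cosh τ).neg.sub
      (((hasDerivAt_id' τ).const_mul 2).mul (Real.hasDerivAt_sinh τ))).add
      (((Real.hasDerivAt_cosh τ).sub ((hasDerivAt_id' τ).mul (Real.hasDerivAt_sinh τ))).div
        ((Real.hasDerivAt_cosh τ).pow 2) (pow_ne_zero 2 (hc τ)))
    refine h.congr_deriv ?_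
    simp
    ring
  refine ⟨fun τ => (h1 τ).differentiableAt, fun τ => (h2 τ).differentiableAt, fun τ => ?_⟩
  rw [(h2 τ).deriv, (h1 τ).deriv, hu, Real.tanh_eq_sinh_div_cosh]
  have hs := Real.cosh_sq τ
  have h0 := hc τ
  generalize Real.cosh τ = c at *
  generalize Real.sinh τ = s at *
  field_simp
  have hs' : s ^ 2 = c ^ 2 - 1 := by linarith
  ring_nf
  try simp only [hs']
  try ring
end

section
/- Let u : ℝ → ℝ be twice differentiable and satisfy u''(τ) + 2·tanh τ·u'(τ) − 3·u(τ) = 0 for all τ ∈ ℝ. Then there exist constants C, D ∈ ℝ such that u(τ) = C·sinh τ + D·cosh(2τ)/cosh τ for all τ ∈ ℝ. -/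
/-- Classification of the `n = 1`, `ℓ = 0` scalar harmonics on dS₃: any twice differentiable
solution of `u'' + 2 tanh τ · u' - 3u = 0` on `ℝ` is of the form
`u(τ) = C sinh τ + D cosh(2τ)/cosh τ`. -/
theorem stmt18 (u : ℝ → ℝ)
    (hu1 : ∀ τ, DifferentiableAt ℝ u τ)
    (hu2 : ∀ τ, DifferentiableAt ℝ (deriv u) τ)
    (hueq : ∀ τ, deriv (deriv u) τ + 2 * Real.tanh τ * deriv u τ - 3 * u τ = 0) :
    ∃ C D : ℝ, ∀ τ, u τ = C * Real.sinh τ + D * Real.cosh (2 * τ) / Real.cosh τ := by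
  have hc : ∀ t, Real.cosh t ≠ 0 := fun t => (Real.cosh_pos t).ne'
  have h1 : ∀ t, HasDerivAt u (deriv u t) t := fun t => (hu1 t).hasDerivAt
  have h2 : ∀ t, HasDerivAt (deriv u) (deriv (deriv u) t) t := fun t => (hu2 t).hasDerivAt
  have hv : ∀ t, HasDerivAt (fun t => u t * Real.cosh t)
      (deriv u t * Real.cosh t + u t * Real.sinh t) t :=
    fun t => (h1 t).mul (Real.hasDerivAt_cosh t)
  have hw : ∀ t, HasDerivAt (fun t => deriv u t * Real.cosh t + u t * Real.sinh t)
      (4 * (u t * Real.cosh t)) t := by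
    intro t
    refine (((h2 t).mul (Real.hasDerivAt_cosh t)).add
      ((h1 t).mul (Real.hasDerivAt_sinh t))).congr_deriv ?_
    have h := hueq t
    rw [Real.tanh_eq_sinh_div_cosh] at h
    have := hc t
    field_simp at h
    linear_combination h
  have hl : ∀ t : ℝ, HasDerivAt (fun t : ℝ => 2 * t) 2 t := fun t => by
    simpa using (hasDerivAt_id t).const_mul (2 : ℝ)
  have hC : ∀ t : ℝ, HasDerivAt (fun t => Real.cosh (2 * t)) (Real.sinh (2 * t) * 2) t :=
    fun t => (hl t).cosh
  have hS : ∀ t : ℝ, HasDerivAt (fun t => Real.sinh (2 * t)) (Real.cosh (2 * t) * 2) t :=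
    fun t => (hl t).sinh
  generalize hV : (fun t => u t * Real.cosh t) = v at hv
  generalize hW : (fun t => deriv u t * Real.cosh t + u t * Real.sinh t) = w at hw
  have eV : ∀ t, u t * Real.cosh t = v t := fun t => congrFun hV t
  have eW : ∀ t, deriv u t * Real.cosh t + u t * Real.sinh t = w t := fun t => congrFun hW t
  simp only [eV] at hw
  simp only [eW] at hv
  have hA : ∀ t, HasDerivAt
      (fun t => v t * Real.cosh (2 * t) - w t * Real.sinh (2 * t) / 2) 0 t := fun t =>
    (((hv t).mul (hC t)).sub (((hw t).mul (hS t)).div_const 2)).congr_deriv (by ring)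
  have hB : ∀ t, HasDerivAt
      (fun t => w t * Real.cosh (2 * t) / 2 - v t * Real.sinh (2 * t)) 0 t := fun t =>
    ((((hw t).mul (hC t)).div_const 2).sub ((hv t).mul (hS t))).congr_deriv (by ring)
  have kA := fun t => is_const_of_deriv_eq_zero (fun t => (hA t).differentiableAt)
    (fun t => (hA t).deriv) t 0
  have kB := fun t => is_const_of_deriv_eq_zero (fun t => (hB t).differentiableAt)
    (fun t => (hB t).deriv) t 0
  simp only [mul_zero, Real.cosh_zero, Real.sinh_zero, mul_one, zero_div, sub_zero] at kA kB
  refine ⟨w 0, v 0, fun t => ?_⟩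
  have hcs := Real.cosh_sq (2 * t)
  have hs := Real.sinh_two_mul t
  have := hc t
  have key : u t * Real.cosh t
      = w 0 * Real.sinh t * Real.cosh t + v 0 * Real.cosh (2 * t) := by
    linear_combination eV t + Real.cosh (2 * t) * kA t + Real.sinh (2 * t) * kB t
      - v t * hcs + w 0 / 2 * hs
  field_simp
  linear_combination key
end

section
/- Let u : ℝ → ℝ be twice differentiable and satisfy u''(τ) + 2·tanh τ·u'(τ) + 2·sech²τ·u(τ) − 3·u(τ) = 0 for all τ ∈ ℝ. Then there exist constants C, D ∈ ℝ such that u(τ) = C·cosh τ + D·(sinh τ − (1/3)·sinh τ·tanh²τ) for all τ ∈ ℝ. -/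
/-- Classification of the `n = 1`, `ℓ = 1` scalar harmonics on dS₃: any twice differentiable
solution of `u'' + 2 tanh τ · u' + 2 sech²τ · u - 3u = 0` on `ℝ` is of the form
`u(τ) = C cosh τ + D (sinh τ - (1/3) sinh τ tanh²τ)`. -/
theorem stmt19 (u : ℝ → ℝ)
    (hu1 : ∀ τ, DifferentiableAt ℝ u τ)
    (hu2 : ∀ τ, DifferentiableAt ℝ (deriv u) τ)
    (hueq : ∀ τ, deriv (deriv u) τ + 2 * Real.tanh τ * deriv u τ +
        2 * (1 / Real.cosh τ) ^ 2 * u τ - 3 * u τ = 0) :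
    ∃ C D : ℝ, ∀ τ, u τ =
      C * Real.cosh τ + D * (Real.sinh τ - (1 / 3) * Real.sinh τ * Real.tanh τ ^ 2) := by
  have hc : ∀ τ, Real.cosh τ ≠ 0 := fun τ => (Real.cosh_pos τ).ne'
  have h1 : ∀ τ, HasDerivAt u (deriv u τ) τ := fun τ => (hu1 τ).hasDerivAt
  have h2 : ∀ τ, HasDerivAt (deriv u) (deriv (deriv u) τ) τ := fun τ => (hu2 τ).hasDerivAt
  have hW : ∀ τ, HasDerivAt
      (fun t => Real.cosh t ^ 2 * (deriv u t * Real.cosh t - u t * Real.sinh t)) 0 τ := by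
    intro τ
    have h := ((Real.hasDerivAt_cosh τ).pow 2).mul
      (((h2 τ).mul (Real.hasDerivAt_cosh τ)).sub ((h1 τ).mul (Real.hasDerivAt_sinh τ)))
    refine h.congr_deriv ?_
    have e := hueq τ
    have e2 : deriv (deriv u) τ = 3 * u τ - 2 * (1 / Real.cosh τ) ^ 2 * u τ
      - 2 * Real.tanh τ * deriv u τ := by linarith
    have hs := Real.cosh_sq τ
    have hcτ := hc τ
    simp only [Pi.pow_apply, Pi.mul_apply, Pi.sub_apply]
    rw [e2, Real.tanh_eq_sinh_div_cosh]
    field_simp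
    norm_num
    linear_combination (2 * u τ * Real.cosh τ) * hs
  have hWc := is_const_of_deriv_eq_zero (fun τ => (hW τ).differentiableAt) (fun τ => (hW τ).deriv)
  have hV : ∀ τ, HasDerivAt
      (fun t => u t / Real.cosh t - deriv u 0 * (Real.sinh t / Real.cosh t
        - 1 / 3 * (Real.sinh t / Real.cosh t) ^ 3)) 0 τ := by
    intro τ
    have ht := (Real.hasDerivAt_sinh τ).div (Real.hasDerivAt_cosh τ) (hc τ)
    have h := ((h1 τ).div (Real.hasDerivAt_cosh τ) (hc τ)).sub
      ((ht.sub ((ht.pow 3).const_mul (1 / 3))).const_mul (deriv u 0))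
    refine h.congr_deriv ?_
    have e := hWc τ 0
    simp at e
    have hs := Real.cosh_sq τ
    have hcτ := hc τ
    simp only [Pi.pow_apply, Pi.mul_apply, Pi.sub_apply, Pi.div_apply]
    rw [← e]
    field_simp
    norm_num
    have hs' : Real.sinh τ ^ 2 = Real.cosh τ ^ 2 - 1 := by linarith
    right
    rw [div_pow]
    field_simp
    linarith
  have hVc := is_const_of_deriv_eq_zero (fun τ => (hV τ).differentiableAt) (fun τ => (hV τ).deriv)
  refine ⟨u 0, deriv u 0, fun τ => ?_⟩
  have e := hVc τ 0
  simp at e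
  have hcτ := hc τ
  have e3 : u τ / Real.cosh τ = u 0 + deriv u 0 * (Real.sinh τ / Real.cosh τ
        - 1 / 3 * (Real.sinh τ / Real.cosh τ) ^ 3) := by linarith
  rw [div_eq_iff hcτ] at e3
  rw [e3, Real.tanh_eq_sinh_div_cosh]
  field_simp
end
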